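/- Let G be a finite simple graph and let e = v_i v_j be a pendent edge of G, where v_i has degree 1 and v_j is a non-pendent vertex (degree d_j ≥ 2). Let d_max^(j) denote the maximum degree among the neighbors of v_j other than v_i. If either (i) every neighbor of v_j other than v_i has degree at least d_j, or (ii) √(d_max^(j)) / (2·√(d_j − 1/2 + 6·d_max^(j))) ≤ √(d_j)/(d_j + 1), then GA(G) > GA(G − e), where G − e is the graph obtained from G by deleting the edge e. -/

import Mathlib

open SimpleGraph

/-- The degree of a vertex, as a natural number (classical, to avoid decidability assumptions). -/
noncomputable def ndeg {V : Type*} [Fintype V] (G : SimpleGraph V) (v : V) : ℕ :=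
  letI := Classical.decRel G.Adj
  G.degree v

/-- The degree of a vertex, as a real number. -/
noncomputable def deg {V : Type*} [Fintype V] (G : SimpleGraph V) (v : V) : ℝ :=
  (ndeg G v : ℝ)

/-- For a symmetric function `f`, `edgeSum G f = Σ_{uv ∈ E(G)} f (d_u) (d_v)`:
each unordered edge is counted twice in the double sum, hence the factor `1/2`. -/
noncomputable def edgeSum {V : Type*} [Fintype V] (G : SimpleGraph V) (f : ℝ → ℝ → ℝ) : ℝ :=
  letI := Classical.decRel G.Adj
  (1 / 2) * ∑ u : V, ∑ w : V, if G.Adj u w then f (deg G u) (deg G w) else 0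

/-- The arithmetic-geometric index `AG(G) = Σ_{uv ∈ E(G)} (1/2)(√(d_u/d_v) + √(d_v/d_u))`. -/
noncomputable def AG {V : Type*} [Fintype V] (G : SimpleGraph V) : ℝ :=
  edgeSum G (fun x y => (Real.sqrt (x / y) + Real.sqrt (y / x)) / 2)

/-- The first geometric-arithmetic index `GA(G) = Σ_{uv ∈ E(G)} 2√(d_u d_v)/(d_u + d_v)`. -/
noncomputable def GA {V : Type*} [Fintype V] (G : SimpleGraph V) : ℝ :=
  edgeSum G (fun x y => 2 * Real.sqrt (x * y) / (x + y))

/-- The forgotten index `F(G) = Σ_{uv ∈ E(G)} (d_u² + d_v²)`. -/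
noncomputable def forgottenIndex {V : Type*} [Fintype V] (G : SimpleGraph V) : ℝ :=
  edgeSum G (fun x y => x ^ 2 + y ^ 2)

/-- The first Zagreb index `M₁(G) = Σ_{uv ∈ E(G)} (d_u + d_v)`. -/
noncomputable def M1 {V : Type*} [Fintype V] (G : SimpleGraph V) : ℝ :=
  edgeSum G (fun x y => x + y)

/-- The second Zagreb index `M₂(G) = Σ_{uv ∈ E(G)} d_u d_v`. -/
noncomputable def M2 {V : Type*} [Fintype V] (G : SimpleGraph V) : ℝ :=
  edgeSum G (fun x y => x * y)

/-- The symmetric division deg index `SDD(G) = Σ_{uv ∈ E(G)} (d_u/d_v + d_v/d_u)`. -/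
noncomputable def SDD {V : Type*} [Fintype V] (G : SimpleGraph V) : ℝ :=
  edgeSum G (fun x y => x / y + y / x)

/-- The atom-bond connectivity index `ABC(G) = Σ_{uv ∈ E(G)} √((d_u + d_v − 2)/(d_u d_v))`. -/
noncomputable def ABC {V : Type*} [Fintype V] (G : SimpleGraph V) : ℝ :=
  edgeSum G (fun x y => Real.sqrt ((x + y - 2) / (x * y)))

/-- `G` is `(s,r)`-semiregular: its vertex set is the disjoint union of two nonempty sets,
all vertices of the first having degree `s` and all vertices of the second degree `r`. -/
def IsSemiregular {V : Type*} [Fintype V] (G : SimpleGraph V) (s r : ℕ) : Prop :=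
  ∃ V₁ V₂ : Set V, V₁.Nonempty ∧ V₂.Nonempty ∧ Disjoint V₁ V₂ ∧ V₁ ∪ V₂ = Set.univ ∧
    (∀ v ∈ V₁, ndeg G v = s) ∧ (∀ v ∈ V₂, ndeg G v = r)

/-!
Deleting the pendent edge `v_i v_j` loses the weight `2√d_j / (d_j + 1)` of that edge and replaces
`d_j` by `d_j - 1` in the weights of the `d_j - 1` other edges at `v_j`; every other weight is
unchanged. Hence it is enough that each of these other edges gains less than a `1 / (d_j - 1)`
fraction of the lost weight. For two positive degrees `a`, `b` at one end of an edge and `x` at the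
other, the weights differ by
`2√x (b - a) (√(ab) - x) / ((√a + √b) (a + x) (b + x))`.
With `a = d_j - 1` and `b = d_j` this is nonpositive as soon as `x ≥ d_j`, and in general `d_j - 1`
times it is less than `√x / √(d_j - 1/2 + 6x)`, an increasing function of `x`: by AM-GM, written
in `p = √(d_j (d_j - 1))`, this comes down to `p (p - x)² (p + 6x) < (p + x)⁴`.
-/

/-- The weight `2√(xy) / (x + y)` that an edge with end degrees `x` and `y` contributes to the
geometric-arithmetic index: the geometric mean of the end degrees over their arithmetic mean. -/
noncomputable def gaWeight (x y : ℝ) : ℝ :=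
  2 * √(x * y) / (x + y)

lemma GA_eq_edgeSum_gaWeight {V : Type*} [Fintype V] (G : SimpleGraph V) :
    GA G = edgeSum G gaWeight :=
  rfl

lemma gaWeight_comm (x y : ℝ) : gaWeight x y = gaWeight y x := by
  rw [gaWeight, gaWeight, mul_comm x y, add_comm x y]

lemma gaWeight_pos {x y : ℝ} (hx : 0 < x) (hy : 0 < y) : 0 < gaWeight x y := by
  unfold gaWeight
  positivity

lemma gaWeight_one_right (x : ℝ) : gaWeight x 1 = 2 * √x / (x + 1) := by
  rw [gaWeight, mul_one]

lemma gaWeight_sub_gaWeight {a b x : ℝ} (ha : 0 < a) (hb : 0 < b) (hx : 0 ≤ x) :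
    gaWeight a x - gaWeight b x =
      2 * √x * (b - a) * (√(a * b) - x) / ((√a + √b) * ((a + x) * (b + x))) := by
  have hcross : (√a + √b) * (√a * (b + x) - √b * (a + x)) = (b - a) * (√a * √b - x) := by
    linear_combination (b + x) * Real.sq_sqrt ha.le - (a + x) * Real.sq_sqrt hb.le
  rw [gaWeight, gaWeight, Real.sqrt_mul ha.le, Real.sqrt_mul hb.le, Real.sqrt_mul ha.le,
    mul_assoc _ (b - a), ← hcross]
  field_simp

lemma gaWeight_le_gaWeight {a b x : ℝ} (ha : 0 < a) (hab : a ≤ b) (hbx : b ≤ x) :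
    gaWeight a x ≤ gaWeight b x := by
  have hb : 0 < b := ha.trans_le hab
  have hx : 0 < x := hb.trans_le hbx
  have hgeom : √(a * b) ≤ x := Real.sqrt_le_iff.2
    ⟨hx.le, by rw [sq]; exact mul_le_mul (hab.trans hbx) hbx hb.le hx.le⟩
  rw [← sub_nonpos, gaWeight_sub_gaWeight ha hb hx.le]
  exact div_nonpos_of_nonpos_of_nonneg
    (mul_nonpos_of_nonneg_of_nonpos (mul_nonneg (by positivity) (sub_nonneg.2 hab))
      (sub_nonpos.2 hgeom)) (by positivity)

lemma sqrt_mul_add_sq_le {a b x : ℝ} (ha : 0 ≤ a) (hb : 0 ≤ b) (hx : 0 ≤ x) :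
    (√(a * b) + x) ^ 2 ≤ (a + x) * (b + x) := by
  have hamgm : 2 * √(a * b) ≤ a + b := by
    rw [Real.sqrt_mul ha]
    linarith [two_mul_le_add_sq √a √b, Real.sq_sqrt ha, Real.sq_sqrt hb]
  linarith [mul_le_mul_of_nonneg_right hamgm hx, Real.sq_sqrt (mul_nonneg ha hb)]

lemma four_mul_sqrt_mul_le_sqrt_add_sqrt_sq {a : ℝ} (ha : 0 ≤ a) (b : ℝ) :
    4 * √(a * b) ≤ (√a + √b) ^ 2 := by
  rw [Real.sqrt_mul ha, ← mul_assoc]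
  exact four_mul_le_sq_add √a √b

lemma mul_sq_sub_mul_lt_add_pow_four {x : ℝ} (hx : x ≠ 0) (p : ℝ) :
    p * (p - x) ^ 2 * (p + 6 * x) < (p + x) ^ 4 := by
  have hgap : (p + x) ^ 4 =
      p * (p - x) ^ 2 * (p + 6 * x) + x ^ 2 * ((17 * p - x) ^ 2 + 16 * x ^ 2) / 17 := by ring
  rw [hgap]
  exact lt_add_of_pos_right _ (by positivity)

lemma sub_one_sq_mul_le_sqrt_sq_mul {d x : ℝ} (hd : 1 ≤ d) (hx : 0 ≤ x) :
    (d - 1) ^ 2 * (d - 1 / 2 + 6 * x) ≤ √((d - 1) * d) ^ 2 * (√((d - 1) * d) + 6 * x) := by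
  have ha : 0 ≤ d - 1 := sub_nonneg.2 hd
  have hgeom : d - 1 ≤ √((d - 1) * d) := Real.le_sqrt_of_sq_le (by linarith)
  calc (d - 1) ^ 2 * (d - 1 / 2 + 6 * x)
      ≤ (d - 1) * d * (d - 1 + 6 * x) := by
        linarith [mul_nonneg ha hx, sq_nonneg (d - 1)]
    _ = √((d - 1) * d) ^ 2 * (d - 1 + 6 * x) := by rw [Real.sq_sqrt (by positivity)]
    _ ≤ √((d - 1) * d) ^ 2 * (√((d - 1) * d) + 6 * x) := by gcongr

lemma two_mul_sub_one_mul_sqrt_sub_mul_lt {d x : ℝ} (hd : 1 < d) (hx : 0 < x) :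
    2 * (d - 1) * (√((d - 1) * d) - x) * √(d - 1 / 2 + 6 * x) <
      (√(d - 1) + √d) * ((d - 1 + x) * (d + x)) := by
  have ha : 0 < d - 1 := sub_pos.2 hd
  have hp : 0 < √((d - 1) * d) := Real.sqrt_pos.2 (by positivity)
  have hq : √(d - 1 / 2 + 6 * x) ^ 2 = d - 1 / 2 + 6 * x := Real.sq_sqrt (by linarith)
  have hsum : 4 * √((d - 1) * d) ≤ (√(d - 1) + √d) ^ 2 :=
    four_mul_sqrt_mul_le_sqrt_add_sqrt_sq ha.le d
  have hscale := sub_one_sq_mul_le_sqrt_sq_mul hd.le hx.le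
  have hprod : (√((d - 1) * d) + x) ^ 2 ≤ (d - 1 + x) * (d + x) :=
    sqrt_mul_add_sq_le ha.le (by linarith) hx.le
  set p := √((d - 1) * d)
  refine lt_of_pow_lt_pow_left₀ 2 (by positivity) ?_
  calc (2 * (d - 1) * (p - x) * √(d - 1 / 2 + 6 * x)) ^ 2
      = 4 * (p - x) ^ 2 * ((d - 1) ^ 2 * (d - 1 / 2 + 6 * x)) := by rw [mul_pow, hq]; ring
    _ ≤ 4 * (p - x) ^ 2 * (p ^ 2 * (p + 6 * x)) := by gcongr
    _ = 4 * p * (p * (p - x) ^ 2 * (p + 6 * x)) := by ring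
    _ < 4 * p * (p + x) ^ 4 := by gcongr; exact mul_sq_sub_mul_lt_add_pow_four hx.ne' p
    _ ≤ (√(d - 1) + √d) ^ 2 * (p + x) ^ 4 := by gcongr
    _ = (√(d - 1) + √d) ^ 2 * ((p + x) ^ 2) ^ 2 := by ring
    _ ≤ (√(d - 1) + √d) ^ 2 * ((d - 1 + x) * (d + x)) ^ 2 := by gcongr
    _ = ((√(d - 1) + √d) * ((d - 1 + x) * (d + x))) ^ 2 := by ring

lemma sub_one_mul_gaWeight_sub_lt_sqrt_div_sqrt {d x : ℝ} (hd : 1 < d) (hx : 0 < x) :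
    (d - 1) * (gaWeight (d - 1) x - gaWeight d x) < √x / √(d - 1 / 2 + 6 * x) := by
  have ha : 0 < d - 1 := sub_pos.2 hd
  have hq : 0 < √(d - 1 / 2 + 6 * x) := Real.sqrt_pos.2 (by linarith)
  have hD : 0 < (√(d - 1) + √d) * ((d - 1 + x) * (d + x)) := by positivity
  rw [gaWeight_sub_gaWeight ha (by linarith) hx.le, ← mul_div_assoc, div_lt_div_iff₀ hD hq]
  linarith [mul_lt_mul_of_pos_left (two_mul_sub_one_mul_sqrt_sub_mul_lt hd hx)
    (Real.sqrt_pos.2 hx)]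

lemma sqrt_div_two_mul_sqrt_le {c x y : ℝ} (hc : 0 < c) (hx : 0 ≤ x) (hxy : x ≤ y) :
    √x / (2 * √(c + 6 * x)) ≤ √y / (2 * √(c + 6 * y)) := by
  have hy : 0 ≤ y := hx.trans hxy
  rw [mul_comm 2, mul_comm 2, ← div_div, ← div_div, ← Real.sqrt_div hx, ← Real.sqrt_div hy]
  gcongr ?_ / 2
  refine Real.sqrt_le_sqrt ?_
  rw [div_le_div_iff₀ (by linarith) (by linarith)]
  linarith [mul_le_mul_of_nonneg_right hxy hc.le]

lemma sub_one_mul_gaWeight_sub_lt_gaWeight_one {d x : ℝ} (hd : 1 < d) (hx : 0 < x)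
    (h : d ≤ x ∨ √x / (2 * √(d - 1 / 2 + 6 * x)) ≤ √d / (d + 1)) :
    (d - 1) * (gaWeight (d - 1) x - gaWeight d x) < gaWeight d 1 := by
  have ha : 0 < d - 1 := sub_pos.2 hd
  rcases h with hdx | h
  · have hmono : gaWeight (d - 1) x ≤ gaWeight d x := gaWeight_le_gaWeight ha (by linarith) hdx
    exact (mul_nonpos_of_nonneg_of_nonpos ha.le (sub_nonpos.2 hmono)).trans_lt
      (gaWeight_pos (by linarith) one_pos)
  · calc (d - 1) * (gaWeight (d - 1) x - gaWeight d x)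
        < √x / √(d - 1 / 2 + 6 * x) := sub_one_mul_gaWeight_sub_lt_sqrt_div_sqrt hd hx
      _ = 2 * (√x / (2 * √(d - 1 / 2 + 6 * x))) := by ring
      _ ≤ 2 * (√d / (d + 1)) := by gcongr
      _ = gaWeight d 1 := by rw [gaWeight_one_right, mul_div_assoc]

lemma sum_lt_of_forall_card_mul_lt {ι K : Type*} [Field K] [LinearOrder K] [IsStrictOrderedRing K]
    {s : Finset ι} {g : ι → K} {c : K} (hc : 0 < c) (h : ∀ i ∈ s, (s.card : K) * g i < c) :
    ∑ i ∈ s, g i < c := by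
  rcases s.eq_empty_or_nonempty with rfl | hs
  · simpa using hc
  · have hcard : (0 : K) < s.card := Nat.cast_pos.2 hs.card_pos
    calc ∑ i ∈ s, g i
        < ∑ _i ∈ s, c / s.card :=
          Finset.sum_lt_sum_of_nonempty hs fun i hi => (lt_div_iff₀' hcard).2 (h i hi)
      _ = c := by rw [Finset.sum_const, nsmul_eq_mul, mul_div_cancel₀ _ hcard.ne']

lemma sum_sum_eq_two_mul_sum_add {ι R : Type*} [Fintype ι] [DecidableEq ι] [CommSemiring R]
    (F : ι → ι → R) (j : ι) (hsymm : ∀ u w, F u w = F w u) (hdiag : F j j = 0) :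
    ∑ u, ∑ w, F u w =
      2 * ∑ w, F j w + ∑ u ∈ Finset.univ.erase j, ∑ w ∈ Finset.univ.erase j, F u w := by
  have hrow (u : ι) : ∑ w, F u w = F j u + ∑ w ∈ Finset.univ.erase j, F u w := by
    rw [← Finset.add_sum_erase _ _ (Finset.mem_univ j), hsymm u j]
  have hrow_j : ∑ w ∈ Finset.univ.erase j, F j w = ∑ w, F j w := by
    rw [hrow j, hdiag, zero_add]
  rw [← Finset.add_sum_erase _ _ (Finset.mem_univ j),
    Finset.sum_congr rfl fun u _ => hrow u, Finset.sum_add_distrib, hrow_j, two_mul, add_assoc]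

section Graph

variable {V : Type*} [Fintype V] {G : SimpleGraph V} {u v w : V}

lemma ndeg_eq_degree (G : SimpleGraph V) [DecidableRel G.Adj] (v : V) : ndeg G v = G.degree v := by
  unfold ndeg
  congr!

lemma deg_pos_of_adj (h : G.Adj v w) : 0 < deg G v := by
  classical
  rw [deg, ndeg_eq_degree, Nat.cast_pos]
  exact h.degree_pos_left

lemma eq_of_ndeg_eq_one (hu : ndeg G u = 1) (hv : G.Adj u v) (hw : G.Adj u w) : w = v := by
  classical
  rw [ndeg_eq_degree, degree_eq_one_iff_existsUnique_adj] at hu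
  exact hu.unique hw hv

lemma card_neighborFinset_erase [DecidableEq V] [DecidableRel G.Adj] (h : G.Adj u v) :
    (((G.neighborFinset v).erase u).card : ℝ) = deg G v - 1 := by
  rw [deg, ndeg_eq_degree, ← card_neighborFinset_eq_degree,
    Finset.cast_card_erase_of_mem ((G.mem_neighborFinset v u).2 h.symm)]

lemma neighborFinset_deleteEdges_singleton [DecidableEq V] [DecidableRel G.Adj]
    [DecidableRel (G.deleteEdges {s(u, v)}).Adj] :
    (G.deleteEdges {s(u, v)}).neighborFinset v = (G.neighborFinset v).erase u := by
  ext w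
  simp only [mem_neighborFinset, deleteEdges_adj, Finset.mem_erase, Set.mem_singleton_iff]
  grind

lemma deg_deleteEdges_singleton_of_adj (h : G.Adj u v) :
    deg (G.deleteEdges {s(u, v)}) v = deg G v - 1 := by
  classical
  rw [← card_neighborFinset_erase h, ← neighborFinset_deleteEdges_singleton,
    card_neighborFinset_eq_degree, deg, ndeg_eq_degree]

lemma deg_deleteEdges_singleton_of_ne (hu : w ≠ u) (hv : w ≠ v) :
    deg (G.deleteEdges {s(u, v)}) w = deg G w := by
  classical
  have hN : (G.deleteEdges {s(u, v)}).neighborFinset w = G.neighborFinset w := by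
    ext z
    simp [hu, hv]
  rw [deg, deg, ndeg_eq_degree, ndeg_eq_degree, ← card_neighborFinset_eq_degree, hN,
    card_neighborFinset_eq_degree]

variable {f : ℝ → ℝ → ℝ}

lemma edgeSum_eq_sum_neighborFinset_add [DecidableEq V] [DecidableRel G.Adj]
    (hf : ∀ x y, f x y = f y x) (v : V) :
    edgeSum G f = ∑ w ∈ G.neighborFinset v, f (deg G v) (deg G w) +
      1 / 2 * ∑ u ∈ Finset.univ.erase v, ∑ w ∈ Finset.univ.erase v,
        if G.Adj u w then f (deg G u) (deg G w) else 0 := by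
  have hedgeSum : edgeSum G f =
      1 / 2 * ∑ u, ∑ w, if G.Adj u w then f (deg G u) (deg G w) else 0 := by
    unfold edgeSum
    congr!
  rw [hedgeSum, sum_sum_eq_two_mul_sum_add _ v
      (fun u w => by simp only [G.adj_comm u w, hf (deg G u)]) (if_neg (G.loopless.irrefl v)),
    neighborFinset_eq_filter, Finset.sum_filter]
  ring

lemma edgeSum_sub_edgeSum_deleteEdges_of_pendent [DecidableEq V] [DecidableRel G.Adj]
    (hf : ∀ x y, f x y = f y x) (huv : G.Adj u v) (hu : ndeg G u = 1) :
    edgeSum G f - edgeSum (G.deleteEdges {s(u, v)}) f =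
      f (deg G v) 1 + ∑ w ∈ (G.neighborFinset v).erase u,
        (f (deg G v) (deg G w) - f (deg G v - 1) (deg G w)) := by
  classical
  have hdeg_u : deg G u = 1 := by rw [deg, hu, Nat.cast_one]
  have hne_u {a b : V} (hb : b ≠ v) (hab : G.Adj a b) : a ≠ u := by
    rintro rfl
    exact hb (eq_of_ndeg_eq_one hu huv hab)
  have hterm : ∀ a ∈ Finset.univ.erase v, ∀ b ∈ Finset.univ.erase v,
      (if (G.deleteEdges {s(u, v)}).Adj a b then
        f (deg (G.deleteEdges {s(u, v)}) a) (deg (G.deleteEdges {s(u, v)}) b) else 0) =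
      if G.Adj a b then f (deg G a) (deg G b) else 0 := by
    intro a ha b hb
    rw [Finset.mem_erase] at ha hb
    by_cases hab : G.Adj a b
    · rw [deg_deleteEdges_singleton_of_ne (hne_u hb.1 hab) ha.1,
        deg_deleteEdges_singleton_of_ne (hne_u ha.1 hab.symm) hb.1]
      simp [hab, ha.1, hb.1]
    · simp [hab]
  have hstar : ∀ w ∈ (G.neighborFinset v).erase u,
      f (deg (G.deleteEdges {s(u, v)}) v) (deg (G.deleteEdges {s(u, v)}) w) =
        f (deg G v - 1) (deg G w) := by
    intro w hw
    rw [Finset.mem_erase, mem_neighborFinset] at hw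
    rw [deg_deleteEdges_singleton_of_adj huv, deg_deleteEdges_singleton_of_ne hw.1 hw.2.ne']
  rw [edgeSum_eq_sum_neighborFinset_add hf v, edgeSum_eq_sum_neighborFinset_add hf v,
    Finset.sum_congr rfl fun a ha => Finset.sum_congr rfl (hterm a ha),
    neighborFinset_deleteEdges_singleton, Finset.sum_congr rfl hstar,
    ← Finset.add_sum_erase _ _ ((G.mem_neighborFinset v u).2 huv.symm), hdeg_u,
    Finset.sum_sub_distrib]
  ring

theorem stmt17_general (huv : G.Adj u v) (hu : ndeg G u = 1)
    (hcond : ∀ w, G.Adj v w → w ≠ u → ndeg G v ≤ ndeg G w ∨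
      √(ndeg G w : ℝ) / (2 * √((ndeg G v : ℝ) - 1 / 2 + 6 * (ndeg G w : ℝ))) ≤
        √(ndeg G v : ℝ) / ((ndeg G v : ℝ) + 1)) :
    GA (G.deleteEdges {s(u, v)}) < GA G := by
  classical
  have hgain : ∑ w ∈ (G.neighborFinset v).erase u,
      (gaWeight (deg G v - 1) (deg G w) - gaWeight (deg G v) (deg G w)) < gaWeight (deg G v) 1 := by
    refine sum_lt_of_forall_card_mul_lt (gaWeight_pos (deg_pos_of_adj huv.symm) one_pos) ?_
    intro w hw
    have hdeg : 1 < deg G v := by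
      rw [← sub_pos, ← card_neighborFinset_erase huv, Nat.cast_pos]
      exact Finset.card_pos.2 ⟨w, hw⟩
    rw [Finset.mem_erase, mem_neighborFinset] at hw
    rw [card_neighborFinset_erase huv]
    exact sub_one_mul_gaWeight_sub_lt_gaWeight_one hdeg (deg_pos_of_adj hw.2.symm)
      ((hcond w hw.2 hw.1).imp_left Nat.cast_le.2)
  have hdiff := edgeSum_sub_edgeSum_deleteEdges_of_pendent gaWeight_comm huv hu
  rw [Finset.sum_sub_distrib] at hgain hdiff
  rw [GA_eq_edgeSum_gaWeight, GA_eq_edgeSum_gaWeight]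
  linarith

end Graph

/-- Theorem 12 of the paper: sufficient conditions for `GA(G) > GA(G − e)` when `e = v_i v_j`
is a pendent edge with pendent vertex `v_i` and non-pendent vertex `v_j`. -/
theorem stmt17 {V : Type*} [Fintype V] (G : SimpleGraph V) (vi vj : V)
    (he : G.Adj vi vj) (hvi : ndeg G vi = 1) (hvj : 2 ≤ ndeg G vj)
    (dmaxj : ℕ)
    (hdmaxj : IsGreatest {d : ℕ | ∃ u, G.Adj vj u ∧ u ≠ vi ∧ ndeg G u = d} dmaxj)
    (hcond :
      (∀ u, G.Adj vj u → u ≠ vi → ndeg G vj ≤ ndeg G u) ∨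
      Real.sqrt (dmaxj : ℝ) /
          (2 * Real.sqrt ((ndeg G vj : ℝ) - 1 / 2 + 6 * (dmaxj : ℝ))) ≤
        Real.sqrt (ndeg G vj : ℝ) / ((ndeg G vj : ℝ) + 1)) :
    GA (G.deleteEdges {s(vi, vj)}) < GA G := by
  have hpos : (0 : ℝ) < ndeg G vj - 1 / 2 := by
    have : (2 : ℝ) ≤ ndeg G vj := by exact_mod_cast hvj
    linarith
  refine stmt17_general he hvi fun u hu hne => hcond.imp (fun h => h u hu hne) fun h => ?_
  exact (sqrt_div_two_mul_sqrt_le hpos (Nat.cast_nonneg _)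
    (Nat.cast_le.2 (hdmaxj.2 ⟨u, hu, hne, rfl⟩))).trans h
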